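/- arXiv:1204.6698 — 2 statements merged into one kernel-verified Lean document; each statement's English description precedes it below -/
import Mathlib

section
/- Let d ≥ 2, let I be a compact subset of the open unit cube (0,1)^d with Λ := H^{d−1}(I) < ∞, where H^{d−1} denotes the (d−1)-dimensional Hausdorff measure on ℝ^d, and let Ω ⊂ ℝ^d be a bounded open set whose topological boundary has Lebesgue measure zero. Then lim_{r→0⁺} r·H^{d−1}( Ω ∩ ⋃_{z ∈ ℤ^d} r·(z + I) ) = Λ·vol(Ω), where vol denotes d-dimensional Lebesgue measure. -/
/-!
The perforation surface is distributed over the cells `r(z + [0,1)^d)`, and the cell sum is read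
as the Lebesgue integral of a step function. With `cellIndex r x = ⌊x / r⌋` and
`cellMass z = H^{d-1} {y ∈ I | r(z + y) ∈ Ω}`, the scaling law of `H^{d-1}` and the volume `r^d`
of a cell give `r * H^{d-1}(Ω ∩ ⋃ r(z + I)) = ∫ cellMass (cellIndex r x) dx`
(`scaled_measure_eq_lintegral`).

Every point `r(⌊x / r⌋ + y)` with `y ∈ I` lies within `r * √d` of `x` (`dist_cellPoint_le`). Hence
the integrand is eventually `H^{d-1}(I)` at each `x ∈ Ω` and eventually `0` at each
`x ∉ closure Ω`, that is, it converges almost everywhere since `frontier Ω` is null. For `r < 1` it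
is dominated by `H^{d-1}(I)` times the indicator of a bounded neighbourhood of `Ω`, and dominated
convergence concludes.
-/

open MeasureTheory

/-- The integer vector `z` seen as a point of Euclidean space. -/
noncomputable def latticePoint {d : ℕ} (z : Fin d → ℤ) : EuclideanSpace ℝ (Fin d) :=
  (WithLp.equiv 2 (Fin d → ℝ)).symm fun i => (z i : ℝ)

@[simp] lemma latticePoint_apply {d : ℕ} (z : Fin d → ℤ) (i : Fin d) :
    latticePoint z i = z i := rfl

/-- The index `⌊x / r⌋` (coordinatewise) of the cell `r(z + [0,1)^d)` containing `x`. -/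
noncomputable def cellIndex {d : ℕ} (r : ℝ) (x : EuclideanSpace ℝ (Fin d)) : Fin d → ℤ :=
  fun i => ⌊x i / r⌋

lemma measurable_cellIndex {d : ℕ} (r : ℝ) :
    Measurable (cellIndex r : EuclideanSpace ℝ (Fin d) → Fin d → ℤ) := by
  unfold cellIndex
  refine measurable_pi_lambda _ fun i => Int.measurable_floor.comp ?_
  exact Measurable.div_const (by fun_prop) r

lemma volume_cellIndex_fiber {d : ℕ} {r : ℝ} (hr : 0 < r) (z : Fin d → ℤ) :
    volume (cellIndex r ⁻¹' {z} : Set (EuclideanSpace ℝ (Fin d))) = ENNReal.ofReal r ^ d := by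
  have h : (cellIndex r ⁻¹' {z} : Set (EuclideanSpace ℝ (Fin d))) =
      (WithLp.ofLp : EuclideanSpace ℝ (Fin d) → Fin d → ℝ) ⁻¹'
        (Set.univ.pi fun i => Set.Ico (r * z i) (r * (z i + 1))) := by
    ext x
    simp only [Set.mem_preimage, Set.mem_singleton_iff, cellIndex, funext_iff, Set.mem_pi,
      Set.mem_univ, true_imp_iff, Set.mem_Ico, Int.floor_eq_iff, le_div_iff₀ hr, div_lt_iff₀ hr,
      mul_comm r]
  rw [h, (PiLp.volume_preserving_ofLp (Fin d)).measure_preimage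
    (MeasurableSet.univ_pi fun i => measurableSet_Ico).nullMeasurableSet, Real.volume_pi_Ico]
  have : ∀ i, r * ((z i : ℝ) + 1) - r * z i = r := fun i => by ring
  simp [this]

/-- Each coordinate of `x - r(⌊x / r⌋ + y)` is `r` times a difference of two numbers of `[0,1)`,
hence at most `r` in absolute value. -/
lemma dist_cellPoint_le {d : ℕ} {r : ℝ} (hr : 0 < r) (x y : EuclideanSpace ℝ (Fin d))
    (hy : ∀ i, y i ∈ Set.Ioo (0 : ℝ) 1) :
    dist x (r • (latticePoint (cellIndex r x) + y)) ≤ r * √d := by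
  rw [EuclideanSpace.dist_eq]
  have : ∀ i, dist (x i) ((r • (latticePoint (cellIndex r x) + y)) i) ^ 2 ≤ r ^ 2 := by
    intro i
    rw [Real.dist_eq, sq_abs]
    refine sq_le_sq' ?_ ?_ <;>
    · have h1 := Int.floor_le (x i / r)
      have h2 := Int.lt_floor_add_one (x i / r)
      rw [le_div_iff₀ hr] at h1
      rw [div_lt_iff₀ hr] at h2
      obtain ⟨h3, h4⟩ := hy i
      simp only [PiLp.smul_apply, PiLp.add_apply, latticePoint_apply, smul_eq_mul, cellIndex]
      nlinarith
  refine (Real.sqrt_le_sqrt (Finset.sum_le_sum fun i _ => this i)).trans ?_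
  simp only [Finset.sum_const, Finset.card_univ, Fintype.card_fin, nsmul_eq_mul]
  rw [mul_comm, Real.sqrt_mul (sq_nonneg r), Real.sqrt_sq hr.le]

/-- The surface measure of the part of the reference interface `I` that the rescaled copy of
index `z` places inside `Ω`. -/
noncomputable def cellMass {d : ℕ} (I Ω : Set (EuclideanSpace ℝ (Fin d))) (r : ℝ)
    (z : Fin d → ℤ) : ENNReal :=
  μH[(d : ℝ) - 1] {y | y ∈ I ∧ r • (latticePoint z + y) ∈ Ω}

open scoped Pointwise in
/-- The scaling law `H^{d-1}(r • s) = r^{d-1} * H^{d-1}(s)`; the prefactor `r` raises the exponent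
to `d`, so that it matches the volume of a cell. -/
lemma hausdorffMeasure_inter_cell {d : ℕ} (hd : 2 ≤ d) (I Ω : Set (EuclideanSpace ℝ (Fin d)))
    {r : ℝ} (hr : 0 < r) (z : Fin d → ℤ) :
    ENNReal.ofReal r *
        μH[(d : ℝ) - 1] (Ω ∩ (fun y => r • (latticePoint z + y)) '' I) =
      cellMass I Ω r z * ENNReal.ofReal r ^ d := by
  have hd' : (0 : ℝ) ≤ (d : ℝ) - 1 := by
    have : (2 : ℝ) ≤ d := by exact_mod_cast hd
    linarith
  have hset : Ω ∩ (fun y => r • (latticePoint z + y)) '' I =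
      r • ((fun y => latticePoint z + y) '' {y | y ∈ I ∧ r • (latticePoint z + y) ∈ Ω}) := by
    ext x
    simp only [Set.mem_inter_iff, Set.mem_image, Set.mem_smul_set, Set.mem_ofPred_eq]
    constructor
    · rintro ⟨hx, y, hy, rfl⟩
      exact ⟨_, ⟨y, ⟨hy, hx⟩, rfl⟩, rfl⟩
    · rintro ⟨_, ⟨y, ⟨hy, hx⟩, rfl⟩, rfl⟩
      exact ⟨hx, y, hy, rfl⟩
  rw [hset, Measure.hausdorffMeasure_smul₀ hd' hr.ne',
    (isometry_add_left (latticePoint z)).hausdorffMeasure_image (Or.inl hd')]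
  have hpow : ENNReal.ofReal r * ((‖r‖₊ ^ ((d : ℝ) - 1) : NNReal) : ENNReal) =
      ENNReal.ofReal r ^ d := by
    have h0 : ENNReal.ofReal r ≠ 0 := by simpa using hr
    rw [ENNReal.coe_rpow_of_nonneg _ hd', ← enorm_eq_nnnorm, Real.enorm_eq_ofReal hr.le]
    nth_rw 1 [← ENNReal.rpow_one (ENNReal.ofReal r)]
    rw [← ENNReal.rpow_add _ _ h0 ENNReal.ofReal_ne_top, ← ENNReal.rpow_natCast]
    congr 1
    ring
  rw [ENNReal.smul_def, smul_eq_mul, ← mul_assoc, hpow, mul_comm]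
  rfl

/-- The integrand depends on `x` only through its cell, so the right-hand side is the sum over `z`
of `cellMass I Ω r z * r^d`. The left-hand side is the same sum because the copies `r(z + I)` are
disjoint: `I` lies in the open unit cube. -/
lemma scaled_measure_eq_lintegral {d : ℕ} (hd : 2 ≤ d) (I : Set (EuclideanSpace ℝ (Fin d)))
    (hIc : IsCompact I) (hIsub : I ⊆ {x | ∀ i, x i ∈ Set.Ioo (0:ℝ) 1})
    (Ω : Set (EuclideanSpace ℝ (Fin d))) (hΩo : IsOpen Ω) {r : ℝ} (hr : 0 < r) :
    ENNReal.ofReal r * μH[(d : ℝ) - 1]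
        (Ω ∩ ⋃ z : Fin d → ℤ, (fun y => r • (latticePoint z + y)) '' I) =
      ∫⁻ x, cellMass I Ω r (cellIndex r x) := by
  -- The floor map recovers `z` from any point of the copy `r(z + I)`.
  have hidx : ∀ z : Fin d → ℤ, ∀ y ∈ I, cellIndex r (r • (latticePoint z + y)) = z := by
    intro z y hy
    funext i
    obtain ⟨h1, h2⟩ := hIsub hy i
    simp only [cellIndex, PiLp.smul_apply, PiLp.add_apply, latticePoint_apply, smul_eq_mul]
    rw [mul_div_cancel_left₀ _ hr.ne', Int.floor_eq_iff]
    constructor <;> linarith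
  have hmeas : ∀ z : Fin d → ℤ,
      MeasurableSet (Ω ∩ (fun y => r • (latticePoint z + y)) '' I) := fun z =>
    hΩo.measurableSet.inter (hIc.image (by fun_prop)).measurableSet
  have hdisj : Pairwise (Function.onFun Disjoint fun z : Fin d → ℤ =>
      Ω ∩ (fun y => r • (latticePoint z + y)) '' I) := by
    intro z w hzw
    refine Set.disjoint_left.2 ?_
    rintro x ⟨-, y, hy, rfl⟩ ⟨-, y', hy', h⟩
    apply hzw
    rw [← hidx z y hy, ← hidx w y' hy']
    exact congrArg _ h.symm
  rw [Set.inter_iUnion, measure_iUnion hdisj hmeas, ← ENNReal.tsum_mul_left]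
  simp_rw [hausdorffMeasure_inter_cell hd I Ω hr]
  rw [← lintegral_map (f := cellMass I Ω r) (measurable_of_countable _) (measurable_cellIndex r),
    lintegral_countable']
  congr 1
  funext z
  rw [Measure.map_apply (measurable_cellIndex r) (measurableSet_singleton z),
    volume_cellIndex_fiber hr]

theorem stmt_10 {d : ℕ} (hd : 2 ≤ d) (I : Set (EuclideanSpace ℝ (Fin d)))
    (hIc : IsCompact I) (hIsub : I ⊆ {x | ∀ i, x i ∈ Set.Ioo (0:ℝ) 1})
    (hIfin : μH[(d : ℝ) - 1] I < ⊤)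
    (Ω : Set (EuclideanSpace ℝ (Fin d)))
    (hΩo : IsOpen Ω) (hΩb : Bornology.IsBounded Ω)
    (hfr : volume (frontier Ω) = 0) :
    Filter.Tendsto
      (fun r : ℝ => ENNReal.ofReal r * μH[(d : ℝ) - 1]
        (Ω ∩ ⋃ z : Fin d → ℤ,
          (fun y => r • (((WithLp.equiv 2 (Fin d → ℝ)).symm fun i => (z i : ℝ)) + y)) '' I))
      (nhdsWithin 0 (Set.Ioi 0))
      (nhds (μH[(d : ℝ) - 1] I * volume Ω)) := by
  set Λ := μH[(d : ℝ) - 1] I with hΛ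
  have hpos : ∀ᶠ r : ℝ in nhdsWithin 0 (Set.Ioi 0), 0 < r := self_mem_nhdsWithin
  have hsmall : ∀ ε > 0, ∀ᶠ r : ℝ in nhdsWithin 0 (Set.Ioi 0), r * √d < ε := by
    intro ε hε
    have h : Filter.Tendsto (fun r : ℝ => r * √d) (nhdsWithin 0 (Set.Ioi 0)) (nhds 0) := by
      have : Filter.Tendsto (fun r : ℝ => r * √d) (nhds 0) (nhds (0 * √d)) :=
        Filter.Tendsto.mul_const _ Filter.tendsto_id
      rw [zero_mul] at this
      exact this.mono_left nhdsWithin_le_nhds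
    exact h.eventually (gt_mem_nhds hε)
  have hlim : ∫⁻ x, Ω.indicator (fun _ => Λ) x = Λ * volume Ω :=
    lintegral_indicator_const hΩo.measurableSet Λ
  rw [← hlim]
  have key : Filter.Tendsto (fun r : ℝ => ∫⁻ x, cellMass I Ω r (cellIndex r x))
      (nhdsWithin 0 (Set.Ioi 0)) (nhds (∫⁻ x, Ω.indicator (fun _ => Λ) x)) := by
    refine tendsto_lintegral_filter_of_dominated_convergence
      ((Metric.cthickening (√d) Ω).indicator fun _ => Λ) ?_ ?_ ?_ ?_
    · exact Filter.Eventually.of_forall fun r =>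
        (measurable_of_countable (cellMass I Ω r)).comp (measurable_cellIndex r)
    · filter_upwards [hpos, nhdsWithin_le_nhds (gt_mem_nhds (zero_lt_one' ℝ))] with r hr hr1
      refine Filter.Eventually.of_forall fun x => ?_
      by_cases hx : x ∈ Metric.cthickening (√d) Ω
      · rw [Set.indicator_of_mem hx]
        exact measure_mono fun y hy => hy.1
      · have hempty : {y | y ∈ I ∧ r • (latticePoint (cellIndex r x) + y) ∈ Ω} = ∅ := by
          refine Set.eq_empty_of_forall_notMem fun y hy => hx ?_
          refine Metric.mem_cthickening_of_dist_le x _ _ _ hy.2 ?_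
          refine (dist_cellPoint_le hr x y (hIsub hy.1)).trans ?_
          nlinarith [Real.sqrt_nonneg (d : ℝ)]
        rw [cellMass, hempty, measure_empty]
        exact zero_le
    · rw [lintegral_indicator_const Metric.isClosed_cthickening.measurableSet]
      exact ENNReal.mul_ne_top hIfin.ne hΩb.cthickening.measure_lt_top.ne
    · have hae : ∀ᵐ x ∂(volume : Measure (EuclideanSpace ℝ (Fin d))), x ∉ frontier Ω :=
        measure_eq_zero_iff_ae_notMem.1 hfr
      filter_upwards [hae] with x hx
      refine tendsto_const_nhds.congr' ?_
      by_cases hxΩ : x ∈ Ω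
      · obtain ⟨ε, hε, hball⟩ := Metric.isOpen_iff.1 hΩo x hxΩ
        filter_upwards [hpos, hsmall ε hε] with r hr hrε
        rw [Set.indicator_of_mem hxΩ, cellMass, hΛ]
        congr 1
        ext y
        refine ⟨fun hy => ⟨hy, hball ?_⟩, fun hy => hy.1⟩
        rw [Metric.mem_ball, dist_comm]
        exact (dist_cellPoint_le hr x y (hIsub hy)).trans_lt hrε
      · have hxc : x ∈ (closure Ω)ᶜ := fun hc => hx (by
          rw [hΩo.frontier_eq]; exact ⟨hc, hxΩ⟩)
        obtain ⟨ε, hε, hball⟩ := Metric.isOpen_iff.1 isClosed_closure.isOpen_compl x hxc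
        filter_upwards [hpos, hsmall ε hε] with r hr hrε
        have hempty : {y | y ∈ I ∧ r • (latticePoint (cellIndex r x) + y) ∈ Ω} = ∅ := by
          refine Set.eq_empty_of_forall_notMem fun y hy => ?_
          refine hball ?_ (subset_closure hy.2)
          rw [Metric.mem_ball, dist_comm]
          exact (dist_cellPoint_le hr x y (hIsub hy.1)).trans_lt hrε
        rw [Set.indicator_of_notMem hxΩ, cellMass, hempty, measure_empty]
  refine key.congr' ?_
  filter_upwards [hpos] with r hr
  exact (scaled_measure_eq_lintegral hd I hIc hIsub Ω hΩo hr).symm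
end

section
/- Let d ≥ 2, let 0 < a < b < 1, let g ∈ ℝ, and let H ∈ ℝ^{d×d} be a symmetric matrix. Let N¹, …, N^d : ℝ^d → ℝ and w : ℝ^d → ℝ be twice continuously differentiable functions, each 1-periodic in the first d−1 coordinates (i.e. f(y + e_j) = f(y) for all y and all j ≤ d−1). Assume: (i) (bulk cascade equation) −Δw(y) + 2·Σ_{j,k=1}^d (∂N^k/∂y_j)(y)·H_{jk} − Σ_{j=1}^d H_{jj} = 0 for all y with a < y_d < b; and (ii) (interface conditions) −(∂w/∂y_d)(y) + Σ_{k=1}^d H_{dk}·N^k(y) = g whenever y_d = b, and (∂w/∂y_d)(y) − Σ_{k=1}^d H_{dk}·N^k(y) = g whenever y_d = a. Then Σ_{k,j=1}^d d_{kj}·H_{kj} = Λ·g, where d_{kj} := ∫_{[0,1]^{d−1}×[a,b]} (δ_{kj} − (∂N^j/∂y_k)(y)) dy and Λ := 2 is the (d−1)-dimensional measure of the interface I = ([0,1]^{d−1}×{a}) ∪ ([0,1]^{d−1}×{b}) per unit cell. -/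
/-!
The statement is the divergence theorem for the flux
`F_i = -∂w/∂y_i + ∑_k H_{ik} N^k` on the box `[0,1]^{d-1} × [a,b]`.
In the open slab the bulk equation turns `div F = -Δw + ∑_{i,k} H_{ik} ∂N^k/∂y_i` into
`∑_{k,j} (δ_{kj} - ∂N^j/∂y_k) H_{kj}`, whose integral is the left-hand side
(`flux_hasFDerivAt`, `flux_divergence`). The outward flux through opposite lateral faces cancels
by periodicity (`flux_periodic`), while the interface conditions say that the outward flux
density is the constant `g` on each of the two faces `y_L = a` and `y_L = b`, each of which has
measure one.
-/

open MeasureTheory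

/-- Partial derivative `∂f/∂y_i` of a scalar field on `ℝ^d`. -/
noncomputable def pderiv' {d : ℕ} (f : (Fin d → ℝ) → ℝ) (x : Fin d → ℝ) (i : Fin d) : ℝ :=
  fderiv ℝ f x (Pi.single i 1)

/-- Second partial derivative `∂²f/∂y_i²`. -/
noncomputable def pderiv2 {d : ℕ} (f : (Fin d → ℝ) → ℝ) (x : Fin d → ℝ) (i : Fin d) : ℝ :=
  pderiv' (fun z => pderiv' f z i) x i

/-- The flux `F_i = -∂w/∂y_i + ∑_k H_{ik} N^k`. -/
noncomputable def flux {d : ℕ} (H : Matrix (Fin d) (Fin d) ℝ) (N : Fin d → (Fin d → ℝ) → ℝ)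
    (w : (Fin d → ℝ) → ℝ) (i : Fin d) (y : Fin d → ℝ) : ℝ :=
  -pderiv' w y i + ∑ k, H i k * N k y

theorem contDiff_pderiv' {d : ℕ} {f : (Fin d → ℝ) → ℝ} (hf : ContDiff ℝ 2 f) (i : Fin d) :
    ContDiff ℝ 1 (fun y => pderiv' f y i) :=
  (hf.fderiv_right (m := 1) (by norm_num)).clm_apply contDiff_const

theorem continuous_pderiv' {d : ℕ} {f : (Fin d → ℝ) → ℝ} (hf : ContDiff ℝ 1 f) (i : Fin d) :
    Continuous (fun y => pderiv' f y i) :=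
  (hf.continuous_fderiv (by norm_num)).clm_apply continuous_const

theorem pderiv'_periodic {d : ℕ} {f : (Fin d → ℝ) → ℝ} {v : Fin d → ℝ}
    (hf : ∀ y, f (y + v) = f y) (y : Fin d → ℝ) (i : Fin d) :
    pderiv' f (y + v) i = pderiv' f y i := by
  have h : (fun z => f (z + v)) = f := funext hf
  unfold pderiv'
  rw [← fderiv_comp_add_right v, h]

section Flux

variable {d : ℕ} {H : Matrix (Fin d) (Fin d) ℝ} {N : Fin d → (Fin d → ℝ) → ℝ}
  {w : (Fin d → ℝ) → ℝ}

theorem flux_contDiff (hN : ∀ k, ContDiff ℝ 2 (N k)) (hw : ContDiff ℝ 2 w) (i : Fin d) :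
    ContDiff ℝ 1 (flux H N w i) := by
  unfold flux
  refine (contDiff_pderiv' hw i).neg.add (ContDiff.sum fun k _ => ?_)
  exact contDiff_const.mul ((hN k).of_le (by norm_num))

theorem flux_hasFDerivAt (hN : ∀ k, ContDiff ℝ 2 (N k)) (hw : ContDiff ℝ 2 w) (i : Fin d)
    (y : Fin d → ℝ) :
    HasFDerivAt (flux H N w i)
      (-fderiv ℝ (fun z => pderiv' w z i) y + ∑ k, H i k • fderiv ℝ (N k) y) y := by
  have h1 := ((contDiff_pderiv' hw i).differentiable (by norm_num) y).hasFDerivAt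
  refine h1.neg.add (HasFDerivAt.fun_sum fun k _ => ?_)
  exact (((hN k).differentiable (by norm_num) y).hasFDerivAt).const_mul (H i k)

theorem flux_divergence (hN : ∀ k, ContDiff ℝ 2 (N k)) (hw : ContDiff ℝ 2 w) (y : Fin d → ℝ) :
    ∑ i, fderiv ℝ (flux H N w i) y (Pi.single i 1)
      = -(∑ i, pderiv2 w y i) + ∑ i, ∑ k, pderiv' (N k) y i * H i k := by
  rw [← Finset.sum_neg_distrib, ← Finset.sum_add_distrib]
  refine Finset.sum_congr rfl fun i _ => ?_
  rw [(flux_hasFDerivAt hN hw i y).fderiv]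
  simp [pderiv2, pderiv', mul_comm]

theorem flux_periodic {v : Fin d → ℝ} (hN : ∀ k y, N k (y + v) = N k y)
    (hw : ∀ y, w (y + v) = w y) (i : Fin d) (y : Fin d → ℝ) :
    flux H N w i (y + v) = flux H N w i y := by
  simp only [flux, pderiv'_periodic hw, hN]

end Flux

/-- Solvability condition producing the homogenized oxygen equation in the slab geometry
`Y^p = [0,1]^{d−1} × [a,b]`: if the cascade equation
`−Δw + 2Σ_{j,k}(∂N^k/∂y_j)H_{jk} − Σ_j H_{jj} = 0` holds in the slab and the interface
conditions `∓∂w/∂y_d ± Σ_k H_{dk}N^k = g` hold on its two faces `y_d = b`, `y_d = a`, with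
all data 1-periodic in the first `d−1` coordinates, then `Σ_{k,j} d_{kj}H_{kj} = Λ·g`, where
`d_{kj} := ∫_{Y^p}(δ_{kj} − ∂N^j/∂y_k)dy` and `Λ = 2` is the interface measure per cell. -/
theorem stmt_15 {d : ℕ} (hd : 2 ≤ d) (a b g : ℝ) (ha : 0 < a) (hab : a < b) (hb1 : b < 1)
    (H : Matrix (Fin d) (Fin d) ℝ) (hH : H.IsSymm)
    (L : Fin d) (hL : (L : ℕ) = d - 1)
    (N : Fin d → (Fin d → ℝ) → ℝ) (w : (Fin d → ℝ) → ℝ)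
    (hNreg : ∀ k, ContDiff ℝ 2 (N k)) (hwreg : ContDiff ℝ 2 w)
    (hNper : ∀ k, ∀ y : Fin d → ℝ, ∀ j : Fin d, (j : ℕ) < d - 1 →
      N k (y + Pi.single j 1) = N k y)
    (hwper : ∀ y : Fin d → ℝ, ∀ j : Fin d, (j : ℕ) < d - 1 →
      w (y + Pi.single j 1) = w y)
    (hbulk : ∀ y : Fin d → ℝ, a < y L → y L < b →
      -(∑ i, pderiv2 w y i)
        + 2 * (∑ j, ∑ k, pderiv' (N k) y j * H j k)
        - (∑ j, H j j) = 0)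
    (htop : ∀ y : Fin d → ℝ, y L = b →
      -pderiv' w y L + (∑ k, H L k * N k y) = g)
    (hbot : ∀ y : Fin d → ℝ, y L = a →
      pderiv' w y L - (∑ k, H L k * N k y) = g) :
    ∑ k, ∑ j,
      (∫ y in {y : Fin d → ℝ | (∀ i, i ≠ L → y i ∈ Set.Icc (0:ℝ) 1) ∧ y L ∈ Set.Icc a b},
        ((if k = j then (1:ℝ) else 0) - pderiv' (N j) y k)) * H k j
      = 2 * g := by
  obtain ⟨n, rfl⟩ : ∃ n, d = n + 1 := ⟨d - 1, by omega⟩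
  have hlt : ∀ i : Fin (n + 1), i ≠ L → (i : ℕ) < n + 1 - 1 := by
    intro i hi
    have := i.isLt
    have : (i : ℕ) ≠ L := fun h => hi (Fin.ext h)
    omega
  set lo : Fin (n + 1) → ℝ := Function.update 0 L a with hlo
  set hi : Fin (n + 1) → ℝ := Function.update 1 L b with hhi
  have hloL : lo L = a := by simp [hlo]
  have hhiL : hi L = b := by simp [hhi]
  have hlo' : ∀ i, i ≠ L → lo i = 0 := fun i h => by simp [hlo, h]
  have hhi' : ∀ i, i ≠ L → hi i = 1 := fun i h => by simp [hhi, h]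
  have hle : lo ≤ hi := by
    intro i
    by_cases h : i = L
    · rw [h, hloL, hhiL]; exact hab.le
    · rw [hlo' i h, hhi' i h]; exact zero_le_one
  have hset : {y : Fin (n + 1) → ℝ |
      (∀ i, i ≠ L → y i ∈ Set.Icc (0:ℝ) 1) ∧ y L ∈ Set.Icc a b} = Set.Icc lo hi := by
    ext y
    rw [← Set.pi_univ_Icc]
    simp only [Set.mem_ofPred_eq, Set.mem_pi, Set.mem_univ, true_implies]
    constructor
    · rintro ⟨h1, h2⟩ i
      by_cases h : i = L
      · rw [h, hloL, hhiL]; exact h2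
      · rw [hlo' i h, hhi' i h]; exact h1 i h
    · intro h
      refine ⟨fun i hi => ?_, ?_⟩
      · have := h i
        rwa [hlo' i hi, hhi' i hi] at this
      · have := h L
        rwa [hloL, hhiL] at this
  rw [hset]
  have hint : ∀ k j, IntegrableOn
      (fun y => ((if k = j then (1:ℝ) else 0) - pderiv' (N j) y k) * H k j) (Set.Icc lo hi) := by
    intro k j
    refine Continuous.integrableOn_Icc ?_
    exact (continuous_const.sub
      (continuous_pderiv' ((hNreg j).of_le (by norm_num)) k)).mul continuous_const
  have hlhs : ∑ k, ∑ j, (∫ y in Set.Icc lo hi,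
        ((if k = j then (1:ℝ) else 0) - pderiv' (N j) y k)) * H k j
      = ∫ y in Set.Icc lo hi, ∑ k, ∑ j,
        ((if k = j then (1:ℝ) else 0) - pderiv' (N j) y k) * H k j := by
    rw [integral_finsetSum _ fun k _ => integrable_finsetSum _ fun j _ => hint k j]
    refine Finset.sum_congr rfl fun k _ => ?_
    rw [integral_finsetSum _ fun j _ => hint k j]
    exact Finset.sum_congr rfl fun j _ => (integral_mul_const _ _).symm
  -- The bulk equation is only available off the faces, which are null sets.
  have hdiv : ∫ y in Set.Icc lo hi, ∑ k, ∑ j,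
        ((if k = j then (1:ℝ) else 0) - pderiv' (N j) y k) * H k j
      = ∫ y in Set.Icc lo hi, ∑ i, fderiv ℝ (flux H N w i) y (Pi.single i 1) := by
    rw [volume_pi, ← setIntegral_congr_set Measure.univ_pi_Ioo_ae_eq_Icc,
      ← setIntegral_congr_set Measure.univ_pi_Ioo_ae_eq_Icc]
    refine setIntegral_congr_fun (MeasurableSet.univ_pi fun _ => measurableSet_Ioo) ?_
    intro y hy
    have hyL := hy L (Set.mem_univ L)
    simp only [hloL, hhiL] at hyL
    have hB := hbulk y hyL.1 hyL.2
    simp only [flux_divergence hNreg hwreg, sub_mul, Finset.sum_sub_distrib, ite_mul, one_mul,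
      zero_mul, Finset.sum_ite_eq, Finset.mem_univ, if_true]
    linarith
  have hsmooth : ∀ i, ContDiff ℝ 1 (flux H N w i) := flux_contDiff hNreg hwreg
  rw [hlhs, hdiv, integral_divergence_of_hasFDerivAt_off_countable' lo hi hle (flux H N w)
    (fun i => fderiv ℝ (flux H N w i)) ∅ Set.countable_empty
    (fun i => (hsmooth i).continuous.continuousOn)
    (fun x _ i => ((hsmooth i).differentiable (by norm_num) x).hasFDerivAt)
    (Continuous.integrableOn_Icc (continuous_finsetSum _ fun i _ =>
      continuous_pderiv' (hsmooth i) i)),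
    Finset.sum_eq_single L]
  · have hvol : (volume : Measure (Fin n → ℝ)).real
        (Set.Icc (lo ∘ L.succAbove) (hi ∘ L.succAbove)) = 1 := by
      rw [measureReal_def, Real.volume_Icc_pi_toReal (a := lo ∘ L.succAbove)
        (b := hi ∘ L.succAbove) fun i => hle (L.succAbove i)]
      refine Finset.prod_eq_one fun i _ => ?_
      simp [hlo' _ (Fin.succAbove_ne L i), hhi' _ (Fin.succAbove_ne L i)]
    have h1 : ∀ x : Fin n → ℝ, flux H N w L (L.insertNth (hi L) x) = g := fun x =>
      htop _ (by simp [hhiL])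
    have h2 : ∀ x : Fin n → ℝ, flux H N w L (L.insertNth (lo L) x) = -g := fun x => by
      have := hbot (L.insertNth (lo L) x) (by simp [hloL])
      simp only [flux]
      linarith
    simp only [h1, h2, setIntegral_const, hvol, smul_eq_mul]
    ring
  · intro i _ hiL
    rw [sub_eq_zero]
    refine integral_congr_ae (Filter.Eventually.of_forall fun x => ?_)
    have hshift : (i.insertNth (hi i) x : Fin (n + 1) → ℝ)
        = i.insertNth (lo i) x + Pi.single i 1 := by
      rw [hlo' i hiL, hhi' i hiL]
      ext j
      refine Fin.succAboveCases i ?_ (fun j => ?_) j <;> simp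
    change flux H N w i _ = flux H N w i _
    rw [hshift]
    exact flux_periodic (fun k y => hNper k y i (hlt i hiL)) (fun y => hwper y i (hlt i hiL)) i _
  · exact fun h => absurd (Finset.mem_univ L) h
end
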